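/- Assume n-wid(_R R) ≤ k. Then a right R-module M is (n,k)-weak cotorsion if and only if M is the direct sum of an injective right R-module and a reduced (n,k)-weak cotorsion right R-module. -/

import Mathlib

/-!
Common definitions for formalizing "(n,k)-weak cotorsion modules" over an arbitrary
(not necessarily commutative) ring `R`.  Left `R`-modules are objects of
`ModuleCat R`, right `R`-modules are objects of `ModuleCat Rᵐᵒᵖ`.

Since Mathlib does not provide `Tor` of a right module with a left module over a
noncommutative ring, we encode the vanishing of `Tor_i^R(N, M)` (for `N` a right
module and `M` a left module) by the equivalent condition
`Ext^i_{Rᵐᵒᵖ}(N, M⋆) = 0`, where `M⋆ = Hom_ℤ(M, ℚ/ℤ)` is the character module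
(a right module).  This is equivalent because `ℚ/ℤ` is an injective cogenerator:
`Ext^i_{Rᵐᵒᵖ}(N, M⋆) ≅ (Tor_i^R(N, M))⋆`, and an abelian group vanishes iff its
character group does.
-/

open CategoryTheory

universe u

noncomputable section

/-- The character group `Hom_ℤ(N, ℚ/ℤ)`. -/
def CharGroup (N : Type u) [AddCommGroup N] : Type u := N →+ AddCircle (1 : ℚ)

instance (N : Type u) [AddCommGroup N] : AddCommGroup (CharGroup N) :=
  inferInstanceAs (AddCommGroup (N →+ AddCircle (1 : ℚ)))

namespace CharGroup

variable {N : Type u} [AddCommGroup N]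

/-- View an element of the character group as an additive monoid hom. -/
def toHom (f : CharGroup N) : N →+ AddCircle (1 : ℚ) := f

/-- Build an element of the character group from an additive monoid hom. -/
def ofHom (f : N →+ AddCircle (1 : ℚ)) : CharGroup N := f

theorem hom_ext {f g : CharGroup N} (h : ∀ m, toHom f m = toHom g m) : f = g :=
  AddMonoidHom.ext h

end CharGroup

open CharGroup in
/-- Left module structure on the character group of a right module. -/
instance charGroupModuleLeft (R : Type u) [Ring R] (N : Type u) [AddCommGroup N]
    [Module Rᵐᵒᵖ N] : Module R (CharGroup N) where
  smul r f := ofHom ((toHom f).comp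
    (AddMonoidHom.mk' (fun m => MulOpposite.op r • m) (fun a b => smul_add _ a b)))
  one_smul f := hom_ext fun m => by
    show toHom f (MulOpposite.op (1 : R) • m) = toHom f m
    rw [MulOpposite.op_one, one_smul]
  mul_smul r s f := hom_ext fun m => by
    show toHom f (MulOpposite.op (r * s) • m)
      = toHom f (MulOpposite.op s • MulOpposite.op r • m)
    rw [MulOpposite.op_mul, mul_smul]
  smul_zero r := CharGroup.hom_ext fun m => rfl
  smul_add r f g := CharGroup.hom_ext fun m => rfl
  add_smul r s f := hom_ext fun m => by
    show toHom f (MulOpposite.op (r + s) • m)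
      = toHom f (MulOpposite.op r • m) + toHom f (MulOpposite.op s • m)
    rw [MulOpposite.op_add, add_smul, map_add]
  zero_smul f := hom_ext fun m => by
    show toHom f (MulOpposite.op (0 : R) • m) = 0
    rw [MulOpposite.op_zero, zero_smul, map_zero]

open CharGroup in
/-- Right module structure on the character group of a left module. -/
instance charGroupModuleRight (R : Type u) [Ring R] (N : Type u) [AddCommGroup N]
    [Module R N] : Module Rᵐᵒᵖ (CharGroup N) where
  smul r f := ofHom ((toHom f).comp
    (AddMonoidHom.mk' (fun m => r.unop • m) (fun a b => smul_add _ a b)))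
  one_smul f := hom_ext fun m => by
    show toHom f ((1 : Rᵐᵒᵖ).unop • m) = toHom f m
    rw [MulOpposite.unop_one, one_smul]
  mul_smul r s f := hom_ext fun m => by
    show toHom f ((r * s).unop • m) = toHom f (s.unop • r.unop • m)
    rw [MulOpposite.unop_mul, mul_smul]
  smul_zero r := CharGroup.hom_ext fun m => rfl
  smul_add r f g := CharGroup.hom_ext fun m => rfl
  add_smul r s f := hom_ext fun m => by
    show toHom f ((r + s).unop • m) = toHom f (r.unop • m) + toHom f (s.unop • m)
    rw [MulOpposite.unop_add, add_smul, map_add]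
  zero_smul f := hom_ext fun m => by
    show toHom f ((0 : Rᵐᵒᵖ).unop • m) = 0
    rw [MulOpposite.unop_zero, zero_smul, map_zero]

variable (R : Type u) [Ring R]

/-- `extVanish S i A B` says that `Ext^i_S(A, B) = 0`. -/
def extVanish (S : Type u) [Ring S] (i : ℕ) (A B : ModuleCat.{u} S) : Prop :=
  Subsingleton (((Ext ℤ (ModuleCat.{u} S) i).obj (Opposite.op A)).obj B)

/-- The character module of a right `R`-module, as a left `R`-module. -/
def charLeft (N : ModuleCat.{u} Rᵐᵒᵖ) : ModuleCat.{u} R :=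
  ModuleCat.of R (CharGroup N)

/-- The character module of a left `R`-module, as a right `R`-module. -/
def charRight (M : ModuleCat.{u} R) : ModuleCat.{u} Rᵐᵒᵖ :=
  ModuleCat.of Rᵐᵒᵖ (CharGroup M)

/-- `torVanish R i N M` encodes `Tor_i^R(N, M) = 0` for a right module `N` and a
left module `M`, via the character module duality
`Ext^i_R(M, N⋆) ≅ (Tor_i^R(N, M))⋆`. -/
def torVanish (i : ℕ) (N : ModuleCat.{u} Rᵐᵒᵖ) (M : ModuleCat.{u} R) : Prop :=
  extVanish R i M (charLeft R N)

/-- `K` is a special super finitely presented `S`-module (for the parameter `n`):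
`K` is the image of `F_n → F_{n-1}` in a projective resolution
`⋯ → F_{n+1} → F_n → ⋯ → F_0 → U → 0` of some module `U` in which `F_i` is finitely
generated projective for all `i ≥ n`.  (For `n = 0` the distinguished module is `U`
itself, matching `Ext^{n+1}(U, -) ≅ Ext^1(K_{n-1}, -)`.) -/
def IsSpecialSFP (S : Type u) [Ring S] (n : ℕ) (K : ModuleCat.{u} S) : Prop :=
  ∃ (U : ModuleCat.{u} S) (F : ℕ → ModuleCat.{u} S)
    (d : ∀ i, F (i + 1) →ₗ[S] F i) (π : F 0 →ₗ[S] U),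
      (∀ i, Module.Projective S (F i)) ∧
      (∀ i, n ≤ i → Module.Finite S (F i)) ∧
      Function.Surjective π ∧ Function.Exact (d 0) π ∧
      (∀ i, Function.Exact (d (i + 1)) (d i)) ∧
      (if n = 0 then Nonempty ((K : Type u) ≃ₗ[S] U)
       else Nonempty ((K : Type u) ≃ₗ[S] LinearMap.range (d (n - 1))))

/-- The `n`-weak injective dimension of a left `S`-module `M` is at most `k`. -/
def nwidLE (S : Type u) [Ring S] (n k : ℕ) (M : ModuleCat.{u} S) : Prop :=
  ∀ K : ModuleCat.{u} S, IsSpecialSFP S n K → extVanish S (k + 1) K M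

/-- The `n`-weak flat dimension of a right `R`-module `N` is at most `k`:
`Tor_{k+1}^R(N, K) = 0` for every special super finitely presented left module `K`. -/
def nwfdLE (n k : ℕ) (N : ModuleCat.{u} Rᵐᵒᵖ) : Prop :=
  ∀ K : ModuleCat.{u} R, IsSpecialSFP R n K → torVanish R (k + 1) N K

/-- A right `R`-module `M` is `(n,k)`-weak cotorsion if `Ext^1(N, M) = 0` for every
right module `N` of `n`-weak flat dimension at most `k`. -/
def IsNKWeakCotorsion (n k : ℕ) (M : ModuleCat.{u} Rᵐᵒᵖ) : Prop :=
  ∀ N : ModuleCat.{u} Rᵐᵒᵖ, nwfdLE R n k N → extVanish Rᵐᵒᵖ 1 N M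

/-- Projective dimension at most `k`, via Ext vanishing. -/
def pdLE (S : Type u) [Ring S] (k : ℕ) (K : ModuleCat.{u} S) : Prop :=
  ∀ M : ModuleCat.{u} S, extVanish S (k + 1) K M

/-- Injective dimension at most `k`, via Ext vanishing. -/
def idLE (S : Type u) [Ring S] (k : ℕ) (M : ModuleCat.{u} S) : Prop :=
  ∀ N : ModuleCat.{u} S, extVanish S (k + 1) N M

/-- Flat dimension of a right module at most `k`, via Tor vanishing. -/
def fdLE (k : ℕ) (N : ModuleCat.{u} Rᵐᵒᵖ) : Prop :=
  ∀ A : ModuleCat.{u} R, torVanish R (k + 1) N A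

/-- `l.n.sp.gldim(R) ≤ k` : every special super finitely presented left module has
projective dimension at most `k`. -/
def lnspGldimLE (n k : ℕ) : Prop :=
  ∀ K : ModuleCat.{u} R, IsSpecialSFP R n K → pdLE R k K

/-- `w.gl.dim(R) ≤ k`. -/
def wGldimLE (k : ℕ) : Prop :=
  ∀ N : ModuleCat.{u} Rᵐᵒᵖ, fdLE R k N

/-- A right `R`-module `M` is `k`-cotorsion if `Ext^1(F, M) = 0` for every right
module `F` of flat dimension at most `k`. -/
def IsKCotorsion (k : ℕ) (M : ModuleCat.{u} Rᵐᵒᵖ) : Prop :=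
  ∀ F : ModuleCat.{u} Rᵐᵒᵖ, fdLE R k F → extVanish Rᵐᵒᵖ 1 F M

/-- `φ : E → D` is a `𝒞`-precover of `D`. -/
def IsPrecover (S : Type u) [Ring S] (𝒞 : ModuleCat.{u} S → Prop)
    (E D : ModuleCat.{u} S) (φ : E →ₗ[S] D) : Prop :=
  𝒞 E ∧ ∀ F : ModuleCat.{u} S, 𝒞 F → ∀ g : F →ₗ[S] D, ∃ h : F →ₗ[S] E, φ ∘ₗ h = g

/-- `φ : E → D` is a `𝒞`-cover of `D`. -/
def IsCover (S : Type u) [Ring S] (𝒞 : ModuleCat.{u} S → Prop)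
    (E D : ModuleCat.{u} S) (φ : E →ₗ[S] D) : Prop :=
  IsPrecover S 𝒞 E D φ ∧ ∀ g : E →ₗ[S] E, φ ∘ₗ g = φ → Function.Bijective g

/-- `f : X → F` is a `𝒞`-preenvelope of `X`. -/
def IsPreenvelope (S : Type u) [Ring S] (𝒞 : ModuleCat.{u} S → Prop)
    (X F : ModuleCat.{u} S) (f : X →ₗ[S] F) : Prop :=
  𝒞 F ∧ ∀ F' : ModuleCat.{u} S, 𝒞 F' → ∀ g : X →ₗ[S] F', ∃ h : F →ₗ[S] F', h ∘ₗ f = g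

/-- A module is reduced if it has no nonzero injective submodules. -/
def IsReducedModule (S : Type u) [Ring S] (M : ModuleCat.{u} S) : Prop :=
  ∀ N : Submodule S M, Module.Injective S N → N = ⊥

/-- `D` is an `m`-th cosyzygy of `M`: there is an exact sequence
`0 → M → E^0 → ⋯ → E^{m-1} → D → 0` with each `E^i` injective. -/
def IsCosyzygy (S : Type u) [Ring S] : ℕ → ModuleCat.{u} S → ModuleCat.{u} S → Prop
  | 0, M, D => Nonempty ((M : Type u) ≃ₗ[S] D)
  | m + 1, M, D => ∃ (C E : ModuleCat.{u} S), IsCosyzygy S m M C ∧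
      Module.Injective S E ∧
      ∃ (ι : C →ₗ[S] E) (p : E →ₗ[S] D),
        Function.Injective ι ∧ Function.Surjective p ∧ Function.Exact ι p


/-- A left `R`-module `F` is flat: `Tor_1(A, F) = 0` for every right module `A`
(encoded via character duality, as above). -/
def IsFlatModule (R : Type u) [Ring R] (F : ModuleCat.{u} R) : Prop :=
  ∀ A : ModuleCat.{u} Rᵐᵒᵖ, torVanish R 1 A F

end

/-!
Let `c` be a directed family of injective submodules of a weak cotorsion module `M`, and embed `M`
into an injective module `E`. Since `Tor` commutes with directed unions, `Tor_{k+1}(E ⧸ ⋃ c, K)` is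
controlled by the groups `Tor_{k+1}(E ⧸ I, K)`, `I ∈ c`; each `E ⧸ I` is injective, so these vanish
for special super finitely presented `K` as soon as `Ext^{k+1}(K, R) = 0`. Hence `E ⧸ ⋃ c` has
`n`-weak flat dimension at most `k`, and the inclusion `⋃ c → M` extends to some `g : E → M`. An
injective hull `V ⊆ E` of `⋃ c` meets `ker g` trivially, so `g(V)` is an injective submodule of `M`
above `c`. By Zorn's lemma `M` has a maximal injective submodule, and any complement of it is
reduced.

For `K` with a resolution `P` by finitely generated projectives, `Tor_i(N, K)` is computed here as
the homology of the complex of groups `Hom(P*, N)`, whose terms are isomorphic to `N ⊗ P`.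
-/

universe v

section LinearExtension

variable {S : Type*} [Ring S]

theorem exists_comp_eq_of_surjective {A B X : Type*} [AddCommGroup A] [Module S A] [AddCommGroup B]
    [Module S B] [AddCommGroup X] [Module S X] {p : A →ₗ[S] B} (hp : Function.Surjective p)
    (f : A →ₗ[S] X) (hf : LinearMap.ker p ≤ LinearMap.ker f) : ∃ g : B →ₗ[S] X, g ∘ₗ p = f := by
  refine ⟨(LinearMap.ker p).liftQ f hf ∘ₗ (p.quotKerEquivOfSurjective hp).symm, ?_⟩
  ext x
  have : (p.quotKerEquivOfSurjective hp).symm (p x) = Submodule.Quotient.mk x := by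
    rw [LinearEquiv.symm_apply_eq, LinearMap.quotKerEquivOfSurjective_apply_mk]
  rw [LinearMap.comp_apply, LinearMap.comp_apply, LinearEquiv.coe_coe, this, Submodule.liftQ_apply]

theorem exists_extension_of_sup_range_eq_top {B P X : Type*} [AddCommGroup B] [Module S B]
    [AddCommGroup P] [Module S P] [AddCommGroup X] [Module S X] {U : Submodule S B} {α : P →ₗ[S] B}
    (hα : U ⊔ LinearMap.range α = ⊤) (f : U →ₗ[S] X) (h : P →ₗ[S] X)
    (hfh : ∀ x (u : U), α x = u → h x = f u) : ∃ g : B →ₗ[S] X, g ∘ₗ U.subtype = f := by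
  have hsurj : Function.Surjective (U.subtype.coprod α) := by
    rw [← LinearMap.range_eq_top, LinearMap.range_coprod, U.range_subtype, hα]
  obtain ⟨g, hg⟩ := exists_comp_eq_of_surjective hsurj (f.coprod h) fun ⟨u, x⟩ hux => by
    have hxu : (u : B) + α x = 0 := hux
    have := hfh x (-u) (eq_neg_of_add_eq_zero_right hxu)
    rw [LinearMap.mem_ker, LinearMap.coprod_apply, this, map_neg, add_neg_cancel]
  exact ⟨g, LinearMap.ext fun u => by simpa using LinearMap.congr_fun hg (u, 0)⟩

end LinearExtension

section InjectiveModules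

variable {S : Type*} [Ring S]

theorem exists_comp_eq_of_baer {Q A B : Type*} [AddCommGroup Q] [Module S Q] [AddCommGroup A]
    [Module S A] [AddCommGroup B] [Module S B] (hQ : Module.Baer S Q) (j : A →ₗ[S] B)
    (f : A →ₗ[S] Q) (hf : LinearMap.ker j ≤ LinearMap.ker f) : ∃ g : B →ₗ[S] Q, g ∘ₗ j = f := by
  have hj : Function.Injective ((LinearMap.ker j).liftQ j le_rfl) :=
    LinearMap.ker_eq_bot.1 (Submodule.ker_liftQ_eq_bot _ _ _ le_rfl)
  obtain ⟨g, hg⟩ := hQ.extension_property _ hj ((LinearMap.ker j).liftQ f hf)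
  exact ⟨g, LinearMap.ext fun a => LinearMap.congr_fun hg (Submodule.Quotient.mk a)⟩

variable {E Q : Type v} [AddCommGroup E] [Module S E] [AddCommGroup Q] [Module S Q]

theorem moduleInjective_of_retract [hE : Module.Injective S E] (s : Q →ₗ[S] E) (p : E →ₗ[S] Q)
    (hps : p ∘ₗ s = LinearMap.id) : Module.Injective S Q where
  out X Y _ _ _ _ f hf g := by
    obtain ⟨t, ht⟩ := hE.out f hf (s ∘ₗ g)
    exact ⟨p ∘ₗ t, fun x => by
      rw [LinearMap.comp_apply, ht, LinearMap.comp_apply, ← LinearMap.comp_apply p, hps,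
        LinearMap.id_apply]⟩

theorem moduleInjective_of_equiv [Module.Injective S E] (e : E ≃ₗ[S] Q) : Module.Injective S Q :=
  moduleInjective_of_retract e.symm.toLinearMap e.toLinearMap (by simp)

theorem moduleInjective_prod [hE : Module.Injective S E] [hQ : Module.Injective S Q] :
    Module.Injective S (E × Q) where
  out X Y _ _ _ _ f hf g := by
    obtain ⟨t, ht⟩ := hE.out f hf (LinearMap.fst S E Q ∘ₗ g)
    obtain ⟨t', ht'⟩ := hQ.out f hf (LinearMap.snd S E Q ∘ₗ g)
    exact ⟨t.prod t', fun x => Prod.ext (ht x) (ht' x)⟩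

theorem moduleInjective_of_isCompl [Module.Injective S E] {V W : Submodule S E}
    (hVW : IsCompl V W) : Module.Injective S V :=
  moduleInjective_of_retract V.subtype (V.projectionOnto W hVW)
    (LinearMap.ext fun v => Submodule.projectionOnto_apply_left hVW v)

theorem exists_isCompl_of_moduleInjective (V : Submodule S E) [hV : Module.Injective S V] :
    ∃ W, IsCompl V W := by
  obtain ⟨r, hr⟩ := hV.out V.subtype V.injective_subtype LinearMap.id
  exact ⟨LinearMap.ker r, LinearMap.isCompl_of_proj hr⟩

theorem moduleInjective_quotient [Module.Injective S E] (V : Submodule S E)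
    [Module.Injective S V] : Module.Injective S (E ⧸ V) := by
  obtain ⟨W, hVW⟩ := exists_isCompl_of_moduleInjective V
  have : Module.Injective S W := moduleInjective_of_isCompl hVW.symm
  exact moduleInjective_of_equiv (V.quotientEquivOfIsCompl W hVW).symm

theorem moduleInjective_map (g : E →ₗ[S] Q) (V : Submodule S E) [Module.Injective S V]
    (hV : Disjoint V (LinearMap.ker g)) : Module.Injective S (V.map g) := by
  have hg : Function.Injective (g.domRestrict V) := LinearMap.injective_domRestrict_iff.2 hV
  rw [← LinearMap.range_domRestrict]
  exact moduleInjective_of_equiv (LinearEquiv.ofInjective _ hg)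

theorem moduleInjective_sup (V W : Submodule S E) [Module.Injective S V] [Module.Injective S W]
    (hVW : Disjoint V W) : Module.Injective S ↥(V ⊔ W) := by
  have := moduleInjective_prod (S := S) (E := V) (Q := W)
  have hinj : Function.Injective (V.subtype.coprod W.subtype) := by
    rw [← LinearMap.ker_eq_bot, LinearMap.ker_coprod_of_disjoint_range] <;> simp [hVW]
  rw [Submodule.sup_eq_range]
  exact moduleInjective_of_equiv (LinearEquiv.ofInjective _ hinj)

end InjectiveModules

section InjectiveHull

theorem exists_le_maximal_disjoint {α : Type*} [CompleteLattice α] [IsCompactlyGenerated α]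
    {a b : α} (hab : Disjoint a b) : ∃ w, a ≤ w ∧ Maximal (Disjoint · b) w :=
  zorn_le_nonempty₀ {w | Disjoint w b} (fun c hc hchain _ _ =>
    ⟨sSup c, hchain.directedOn.disjoint_sSup_left.2 fun _ h => hc h, fun _ => le_sSup⟩) a hab

variable {S : Type*} [Ring S] {E : Type v} [AddCommGroup E] [Module S E] [hE : Module.Injective S E]

theorem isCompl_of_maximal_disjoint {V W : Submodule S E} (hV : Maximal (Disjoint · W) V)
    (hW : Maximal (Disjoint · V) W) : IsCompl V W := by
  have hinj : Function.Injective (W.mkQ ∘ₗ V.subtype) := by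
    rw [← LinearMap.domRestrict, LinearMap.injective_domRestrict_iff, W.ker_mkQ]
    exact hV.prop
  obtain ⟨t, ht⟩ := hE.out _ hinj V.subtype
  let τ : E →ₗ[S] E := t ∘ₗ W.mkQ
  have hτV : ∀ v ∈ V, τ v = v := fun v hv => ht ⟨v, hv⟩
  have hWτ : W ≤ LinearMap.ker τ := W.ker_mkQ.ge.trans (LinearMap.ker_le_ker_comp _ _)
  have hker : LinearMap.ker τ = W := by
    refine (hW.eq_of_le (Submodule.disjoint_def.2 fun x hx hxV => ?_) hWτ).symm
    rw [← hτV x hxV, hx]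
  have hcomap : W.comap τ = W := by
    refine (hW.eq_of_le (Submodule.disjoint_def.2 fun x hx hxV => ?_) fun w hw => ?_).symm
    · rw [Submodule.mem_comap, hτV x hxV] at hx
      exact Submodule.disjoint_def.1 hW.prop x hx hxV
    · rw [Submodule.mem_comap, hWτ hw]
      exact W.zero_mem
  have hrange : LinearMap.range τ = V := by
    refine (hV.eq_of_le (Submodule.disjoint_def.2 ?_) fun v hv =>
      LinearMap.mem_range.2 ⟨v, hτV v hv⟩).symm
    rintro _ ⟨y, rfl⟩ hy
    exact hWτ (hcomap.le hy)
  have hproj : LinearMap.IsProj V τ := ⟨fun x => hrange.le ⟨x, rfl⟩, hτV⟩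
  exact hker ▸ hproj.isCompl

theorem exists_injective_essential_extension (U : Submodule S E) :
    ∃ V : Submodule S E, U ≤ V ∧ Module.Injective S V ∧ ∀ X ≤ V, Disjoint X U → X = ⊥ := by
  obtain ⟨W, -, hW⟩ := exists_le_maximal_disjoint (disjoint_bot_left (a := U))
  obtain ⟨V, hUV, hV⟩ := exists_le_maximal_disjoint hW.prop.symm
  have hess : ∀ X ≤ V, Disjoint X U → X = ⊥ := fun X hXV hXU => by
    have hUXW : Disjoint U (X ⊔ W) :=
      hXU.symm.disjoint_sup_right_of_disjoint_sup_left (hV.prop.mono_left (sup_le hUV hXV))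
    have hXW : X ≤ W := le_sup_left.trans (hW.le_of_ge hUXW.symm le_sup_right)
    exact (hV.prop.mono hXV hXW).eq_bot_of_self
  have hWV : Maximal (Disjoint · V) W :=
    ⟨hV.prop.symm, fun W' hW' hWW' => hW.le_of_ge (hW'.mono_right hUV) hWW'⟩
  exact ⟨V, hUV, moduleInjective_of_isCompl (isCompl_of_maximal_disjoint hV hWV), hess⟩

theorem exists_le_injective_of_section {M : Type v} [AddCommGroup M] [Module S M] (ι : M →ₗ[S] E)
    (g : E →ₗ[S] M) (U : Submodule S M) (hg : ∀ u ∈ U, g (ι u) = u) :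
    ∃ V : Submodule S M, U ≤ V ∧ Module.Injective S V := by
  obtain ⟨V, hUV, hV, hess⟩ := exists_injective_essential_extension (U.map ι)
  have hdisj : Disjoint (V ⊓ LinearMap.ker g) (U.map ι) := by
    rw [Submodule.disjoint_def]
    rintro _ ⟨-, hu⟩ ⟨u, hU, rfl⟩
    rw [← hg u hU, show g (ι u) = 0 from hu, map_zero]
  refine ⟨V.map g, fun u hu => ⟨ι u, hUV ⟨u, hu, rfl⟩, hg u hu⟩, ?_⟩
  exact moduleInjective_map g V (disjoint_iff.2 (hess _ inf_le_left hdisj))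

end InjectiveHull

section Ext

variable {S : Type u} [Ring S]

theorem extVanish_of_retract {i : ℕ} {A X Y : ModuleCat.{u} S} (e : Retract X Y)
    (hY : extVanish S i A Y) : extVanish S i A X := by
  let e' := e.map ((Ext ℤ (ModuleCat.{u} S) i).obj (Opposite.op A))
  have : Subsingleton (((Ext ℤ (ModuleCat.{u} S) i).obj (Opposite.op A)).obj Y) := hY
  exact ((ModuleCat.mono_iff_injective e'.i).1 inferInstance).subsingleton

theorem extVanish_succ_iff {A : ModuleCat.{u} S} (P : ProjectiveResolution A) (i : ℕ)
    (X : ModuleCat.{u} S) :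
    extVanish S (i + 1) A X ↔ ∀ f : P.complex.X (i + 1) →ₗ[S] X,
      f ∘ₗ (P.complex.d (i + 2) (i + 1)).hom = 0 →
        ∃ h : P.complex.X i →ₗ[S] X, h ∘ₗ (P.complex.d (i + 1) i).hom = f := by
  unfold extVanish
  rw [← ModuleCat.isZero_iff_subsingleton, (P.isoExt (i + 1) X).isZero_iff,
    ← HomologicalComplex.exactAt_iff_isZero_homology,
    HomologicalComplex.exactAt_iff' _ i (i + 1) (i + 2) (by simp) (by simp),
    ShortComplex.moduleCat_exact_iff]
  refine ⟨fun h f hf => ?_, fun h f hf => ?_⟩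
  · obtain ⟨g, hg⟩ := h (ModuleCat.ofHom f) (ModuleCat.hom_ext hf)
    exact ⟨g.hom, congrArg ModuleCat.Hom.hom hg⟩
  · obtain ⟨g, hg⟩ := h f.hom (congrArg ModuleCat.Hom.hom hf)
    exact ⟨ModuleCat.ofHom g, ModuleCat.hom_ext hg⟩

theorem extVanish_succ_prod {i : ℕ} {A X Y : ModuleCat.{u} S} (hX : extVanish S (i + 1) A X)
    (hY : extVanish S (i + 1) A Y) : extVanish S (i + 1) A (ModuleCat.of S (X × Y)) := by
  rw [extVanish_succ_iff (ProjectiveResolution.of A)] at hX hY ⊢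
  intro f hf
  obtain ⟨a, ha⟩ := hX (LinearMap.fst S X Y ∘ₗ f) (by rw [LinearMap.comp_assoc, hf]; rfl)
  obtain ⟨b, hb⟩ := hY (LinearMap.snd S X Y ∘ₗ f) (by rw [LinearMap.comp_assoc, hf]; rfl)
  exact ⟨a.prod b, LinearMap.ext fun x =>
    Prod.ext (LinearMap.congr_fun ha x) (LinearMap.congr_fun hb x)⟩

theorem extVanish_succ_of_injective {i : ℕ} {A X : ModuleCat.{u} S} (hX : Module.Injective S X) :
    extVanish S (i + 1) A X := by
  let P := ProjectiveResolution.of A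
  have hP : Function.Exact (P.complex.d (i + 2) (i + 1)).hom (P.complex.d (i + 1) i).hom :=
    (ShortComplex.ShortExact.moduleCat_exact_iff_function_exact _).1 (P.exact_succ i)
  rw [extVanish_succ_iff P]
  intro f hf
  refine exists_comp_eq_of_baer (Module.Baer.of_injective hX) _ f ?_
  rw [hP.linearMap_ker_eq]
  exact LinearMap.range_le_ker_iff.2 hf

theorem exists_extension_of_extVanish_one {B : Type u} [AddCommGroup B] [Module S B]
    (U : Submodule S B) {X : ModuleCat.{u} S} (hX : extVanish S 1 (ModuleCat.of S (B ⧸ U)) X)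
    (f : U →ₗ[S] X) : ∃ g : B →ₗ[S] X, g ∘ₗ U.subtype = f := by
  let P := ProjectiveResolution.of (ModuleCat.of S (B ⧸ U))
  let d₁ := (P.complex.d 1 0).hom
  let π : P.complex.X 0 →ₗ[S] B ⧸ U := (P.π.f 0).hom
  have hπ : Function.Surjective π := (ModuleCat.epi_iff_surjective (P.π.f 0)).1 inferInstance
  have hexact : Function.Exact d₁ π :=
    (ShortComplex.ShortExact.moduleCat_exact_iff_function_exact _).1 P.exact₀
  have hd : d₁ ∘ₗ (P.complex.d 2 1).hom = 0 :=
    congrArg ModuleCat.Hom.hom (P.complex.d_comp_d 2 1 0)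
  have : Module.Projective S (P.complex.X 0) :=
    (IsProjective.iff_projective (P.complex.X 0)).2 (P.projective 0)
  obtain ⟨α, hα⟩ := Module.projective_lifting_property U.mkQ π U.mkQ_surjective
  have hαU (x) : α x ∈ U ↔ π x = 0 := by
    rw [← hα, LinearMap.comp_apply, Submodule.mkQ_apply, Submodule.Quotient.mk_eq_zero]
  let β : P.complex.X 1 →ₗ[S] U :=
    (α ∘ₗ d₁).codRestrict U fun x => (hαU _).2 (hexact.apply_apply_eq_zero x)
  obtain ⟨h, hh⟩ := (extVanish_succ_iff P 0 X).1 hX (f ∘ₗ β) <| by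
    have hβ : β ∘ₗ (P.complex.d 2 1).hom = 0 :=
      LinearMap.ext fun x => Subtype.ext <| by
        change α ((d₁ ∘ₗ (P.complex.d 2 1).hom) x) = 0
        rw [hd, LinearMap.zero_apply, map_zero]
    rw [LinearMap.comp_assoc, hβ, LinearMap.comp_zero]
  refine exists_extension_of_sup_range_eq_top (α := α) ?_ f h fun x u hxu => ?_
  · rw [← U.comap_map_mkQ, ← LinearMap.range_comp, hα, LinearMap.range_eq_top.2 hπ,
      Submodule.comap_top]
  · obtain ⟨y, rfl⟩ := (hexact x).1 ((hαU x).1 (hxu ▸ u.2))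
    calc h (d₁ y) = f (β y) := LinearMap.congr_fun hh y
      _ = f u := congrArg f (Subtype.ext hxu)

end Ext

section Resolution

/-- The projective resolution given by a degreewise projective chain complex `K` and an augmentation
`π` such that `⋯ → K₁ → K₀ → Z → 0` is exact; it turns resolutions specified by maps and exactness
conditions into Mathlib's, which are quasi-isomorphisms to a complex in degree `0`. -/
noncomputable def projectiveResolutionOfExact {C : Type*} [Category* C] [Abelian C] {Z : C}
    (K : ChainComplex C ℕ) (hK : ∀ i, Projective (K.X i)) (hd : ∀ i, K.ExactAt (i + 1))
    (π : K.X 0 ⟶ Z) [Epi π] (hπ : K.d 1 0 ≫ π = 0) (h0 : (ShortComplex.mk (K.d 1 0) π hπ).Exact) :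
    ProjectiveResolution Z where
  complex := K
  projective := hK
  π := (ChainComplex.toSingle₀Equiv K Z).symm ⟨π, hπ⟩
  quasiIso := ⟨fun i => by
    cases i with
    | zero =>
      rw [ChainComplex.quasiIsoAt₀_iff, ShortComplex.quasiIso_iff_of_zeros' _
        (K.shape 0 0 (by simp)) rfl rfl]
      refine (ShortComplex.exact_and_epi_g_iff_of_iso ?_).2 ⟨h0, ‹Epi π›⟩
      exact ShortComplex.isoMk (Iso.refl _) (Iso.refl _) (Iso.refl _)
        ((Category.id_comp _).trans (Category.comp_id _).symm)
        ((Category.id_comp _).trans ((Category.comp_id _).trans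
          (ChainComplex.toSingle₀Equiv_symm_apply_f_zero π hπ)).symm)
    | succ i =>
      rw [quasiIsoAt_iff_exactAt' _ _ (ChainComplex.exactAt_succ_single_obj Z i)]
      exact hd i⟩

theorem exists_projectiveResolution_of_exact {S : Type u} [Ring S] {A : ModuleCat.{u} S}
    (F : ℕ → ModuleCat.{u} S) (hF : ∀ i, Module.Projective S (F i))
    (d : ∀ i, F (i + 1) →ₗ[S] F i) (hd : ∀ i, Function.Exact (d (i + 1)) (d i)) (π : F 0 →ₗ[S] A)
    (hπ : Function.Surjective π) (h0 : Function.Exact (d 0) π) :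
    ∃ P : ProjectiveResolution A, P.complex.X = F := by
  let K : ChainComplex (ModuleCat.{u} S) ℕ := ChainComplex.of F (fun i => ModuleCat.ofHom (d i))
    fun i => ModuleCat.hom_ext (hd i).linearMap_comp_eq_zero
  have hKd (i : ℕ) : K.d (i + 1) i = ModuleCat.ofHom (d i) :=
    ChainComplex.of_d F (fun i => ModuleCat.ofHom (d i)) i
  have : Epi (ModuleCat.ofHom π) := (ModuleCat.epi_iff_surjective _).2 hπ
  refine ⟨projectiveResolutionOfExact K (fun i => (IsProjective.iff_projective (F i)).1 (hF i))
    (fun i => ?_) (ModuleCat.ofHom π : K.X 0 ⟶ A) ?_ ?_, rfl⟩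
  · rw [HomologicalComplex.exactAt_iff' _ (i + 2) (i + 1) i (by simp) (by simp),
      ShortComplex.ShortExact.moduleCat_exact_iff_function_exact]
    change Function.Exact (K.d (i + 2) (i + 1)) (K.d (i + 1) i)
    rw [hKd, hKd]
    exact hd i
  · rw [hKd]
    exact ModuleCat.hom_ext h0.linearMap_comp_eq_zero
  · rw [ShortComplex.ShortExact.moduleCat_exact_iff_function_exact]
    change Function.Exact (K.d 1 0) (ModuleCat.ofHom π)
    rw [hKd]
    exact h0

theorem IsSpecialSFP.exists_projectiveResolution_finite {S : Type u} [Ring S] {n : ℕ}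
    {K : ModuleCat.{u} S} (hK : IsSpecialSFP S n K) :
    ∃ P : ProjectiveResolution K, ∀ i, Module.Finite S (P.complex.X i) := by
  obtain ⟨U, F, d, π, hF, hfin, hπ, h0, hd, hK⟩ := hK
  obtain _ | m := n
  · obtain ⟨e⟩ := (if_pos rfl).mp hK
    obtain ⟨P, hP⟩ := exists_projectiveResolution_of_exact F hF d hd (e.symm.toLinearMap ∘ₗ π)
      (e.symm.surjective.comp hπ) (LinearEquiv.postcomp_exact_iff_exact.2 h0)
    exact ⟨P, fun i => hP ▸ hfin i (Nat.zero_le i)⟩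
  · obtain ⟨e⟩ := (if_neg m.succ_ne_zero).mp hK
    obtain ⟨P, hP⟩ := exists_projectiveResolution_of_exact (fun i => F (m + 1 + i)) (fun i => hF _)
      (fun i => d (m + 1 + i)) (fun i => hd _) (e.symm.toLinearMap ∘ₗ (d m).rangeRestrict)
      (e.symm.surjective.comp (d m).surjective_rangeRestrict)
      (LinearEquiv.postcomp_exact_iff_exact.2 fun x => by
        rw [← hd m x, ← Subtype.coe_inj, LinearMap.codRestrict_apply]; rfl)
    exact ⟨P, fun i => hP ▸ hfin _ (Nat.le_add_right _ i)⟩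

end Resolution

namespace CharGroup

variable {R : Type u} [Ring R] {N : Type u} [AddCommGroup N]

theorem toHom_sum {ι : Type*} (s : Finset ι) (c : ι → CharGroup N) (x : N) :
    toHom (∑ i ∈ s, c i) x = ∑ i ∈ s, toHom (c i) x :=
  AddMonoidHom.finsetSum_apply c s x

theorem toHom_smul [Module Rᵐᵒᵖ N] (r : R) (c : CharGroup N) (x : N) :
    toHom (r • c) x = toHom c (MulOpposite.op r • x) := rfl

end CharGroup

section RightDual

variable (R : Type*) [Ring R] (P : Type*) [AddCommGroup P] [Module R P]

/-- The dual `Hom_R(P, R)` of a left module `P`, as a right `R`-module. Mathlib's `Module.Dual`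
only covers commutative coefficients. -/
abbrev RightDual : Type _ := P →ₗ[R] R

theorem exists_dual_basis [Module.Finite R P] [Module.Projective R P] :
    ∃ (m : ℕ) (p : Fin m → P) (φ : Fin m → RightDual R P), ∀ y, ∑ i, φ i y • p i = y := by
  obtain ⟨m, f, s, -, -, hfs⟩ := Module.Finite.exists_comp_eq_id_of_projective R P
  refine ⟨m, fun i => f fun j => if i = j then 1 else 0, fun i => LinearMap.proj i ∘ₗ s,
    fun y => ?_⟩
  exact (f.pi_apply_eq_sum_univ (s y)).symm.trans (LinearMap.congr_fun hfs y)

variable {R P}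

theorem sum_op_smul_dual_basis {m : ℕ} {p : Fin m → P} {φ : Fin m → RightDual R P}
    (h : ∀ y, ∑ i, φ i y • p i = y) (ψ : RightDual R P) :
    ∑ i, MulOpposite.op (ψ (p i)) • φ i = ψ := by
  ext y
  conv_rhs => rw [← h y]
  simp

theorem exists_retraction_to_rightDual [Module.Finite R P] [Module.Projective R P] :
    ∃ (m : ℕ) (s : RightDual R P →ₗ[Rᵐᵒᵖ] (Fin m → Rᵐᵒᵖ))
      (q : (Fin m → Rᵐᵒᵖ) →ₗ[Rᵐᵒᵖ] RightDual R P), q ∘ₗ s = LinearMap.id := by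
  obtain ⟨m, p, φ, hp⟩ := exists_dual_basis R P
  let s : RightDual R P →ₗ[Rᵐᵒᵖ] (Fin m → Rᵐᵒᵖ) :=
    { toFun ψ i := MulOpposite.op (ψ (p i))
      map_add' _ _ := rfl
      map_smul' _ _ := rfl }
  refine ⟨m, s, Fintype.linearCombination Rᵐᵒᵖ φ, LinearMap.ext fun ψ => ?_⟩
  exact sum_op_smul_dual_basis hp ψ

instance [Module.Finite R P] [Module.Projective R P] : Module.Finite Rᵐᵒᵖ (RightDual R P) := by
  obtain ⟨m, s, q, hqs⟩ := exists_retraction_to_rightDual (R := R) (P := P)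
  exact Module.Finite.of_surjective q (LinearMap.surjective_of_comp_eq_id s q hqs)

instance [Module.Finite R P] [Module.Projective R P] : Module.Projective Rᵐᵒᵖ (RightDual R P) := by
  obtain ⟨m, s, q, hqs⟩ := exists_retraction_to_rightDual (R := R) (P := P)
  exact Module.Projective.of_split s q hqs

/-- The transpose `φ ↦ φ ∘ d` of a map of left modules, as a map of right modules. -/
abbrev rightDualMap {P' : Type*} [AddCommGroup P'] [Module R P'] (d : P →ₗ[R] P') :
    RightDual R P' →ₗ[Rᵐᵒᵖ] RightDual R P :=
  LinearMap.lcomp Rᵐᵒᵖ R d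

end RightDual

section Character

open CharGroup

variable {R : Type u} [Ring R] {P : Type*} [AddCommGroup P] [Module R P] {N : Type u}
  [AddCommGroup N] [Module Rᵐᵒᵖ N]

/-- The map `φ ↦ x φ(y)` from the dual of `P` to a right module `N` given by `y ∈ P` and `x ∈ N`,
i.e. the image of `x ⊗ y` under the natural map `N ⊗ P → Hom(P*, N)`. -/
def dualEval (y : P) (x : N) : RightDual R P →ₗ[Rᵐᵒᵖ] N where
  toFun φ := MulOpposite.op (φ y) • x
  map_add' φ ψ := by simp [add_smul]
  map_smul' r φ := by simp [mul_smul]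

/-- The natural map `Hom(P*, N)* → Hom(P, N*)` to the character module of `N`, an isomorphism for
finitely generated projective `P`. It stands in for `Hom(N ⊗ P, ℚ/ℤ) ≅ Hom(P, N*)`, since `N ⊗ P` is
not available over a noncommutative ring. -/
def characterOfDual (Ψ : (RightDual R P →ₗ[Rᵐᵒᵖ] N) →ₗ[ℤ] AddCircle (1 : ℚ)) :
    P →ₗ[R] CharGroup N where
  toFun y := ofHom (AddMonoidHom.mk' (fun x => Ψ (dualEval y x)) fun a b => by
    rw [← map_add]; congr 1; ext φ; simp [dualEval])
  map_add' y z := hom_ext fun x => by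
    change Ψ (dualEval (y + z) x) = Ψ (dualEval y x) + Ψ (dualEval z x)
    rw [← map_add]; congr 1; ext φ; simp [dualEval, add_smul]
  map_smul' r y := hom_ext fun x => by
    change Ψ (dualEval (r • y) x) = Ψ (dualEval y (MulOpposite.op r • x))
    congr 1; ext φ; simp [dualEval, mul_smul]

theorem toHom_characterOfDual (Ψ : (RightDual R P →ₗ[Rᵐᵒᵖ] N) →ₗ[ℤ] AddCircle (1 : ℚ)) (y : P)
    (x : N) : toHom (characterOfDual Ψ y) x = Ψ (dualEval y x) := rfl

theorem characterOfDual_comp {P' : Type*} [AddCommGroup P'] [Module R P'] (d : P →ₗ[R] P')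
    (Ψ : (RightDual R P' →ₗ[Rᵐᵒᵖ] N) →ₗ[ℤ] AddCircle (1 : ℚ)) :
    characterOfDual Ψ ∘ₗ d = characterOfDual (Ψ ∘ₗ LinearMap.lcomp ℤ N (rightDualMap d)) :=
  rfl

theorem characterOfDual_injective [Module.Finite R P] [Module.Projective R P] :
    Function.Injective (characterOfDual (R := R) (P := P) (N := N)) := by
  obtain ⟨m, p, φ, hp⟩ := exists_dual_basis R P
  intro Ψ Ψ' hΨ
  ext g
  have hg : g = ∑ i, dualEval (p i) (g (φ i)) := LinearMap.ext fun ψ => by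
    conv_lhs => rw [← sum_op_smul_dual_basis hp ψ, map_sum]
    simp [dualEval]
  rw [hg, map_sum, map_sum]
  simp_rw [← toHom_characterOfDual, hΨ]

theorem characterOfDual_surjective [Module.Finite R P] [Module.Projective R P] :
    Function.Surjective (characterOfDual (R := R) (P := P) (N := N)) := by
  obtain ⟨m, p, φ, hp⟩ := exists_dual_basis R P
  intro f
  let Ψ : (RightDual R P →ₗ[Rᵐᵒᵖ] N) →ₗ[ℤ] AddCircle (1 : ℚ) :=
    ∑ i, (toHom (f (p i))).toIntLinearMap ∘ₗ LinearMap.applyₗ' ℤ (φ i)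
  refine ⟨Ψ, LinearMap.ext fun y => hom_ext fun x => ?_⟩
  calc toHom (characterOfDual Ψ y) x
      = ∑ i, toHom (f (p i)) (MulOpposite.op (φ i y) • x) := by
        rw [toHom_characterOfDual, LinearMap.sum_apply]; rfl
    _ = toHom (f (∑ i, φ i y • p i)) x := by
        simp only [map_sum, map_smul, toHom_sum, toHom_smul]
    _ = toHom (f y) x := by rw [hp]

theorem exists_comp_eq_charGroup_of_ker_le_range {P₀ P₁ P₂ : Type*} [AddCommGroup P₀] [Module R P₀]
    [AddCommGroup P₁] [Module R P₁] [Module.Finite R P₁] [Module.Projective R P₁]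
    [AddCommGroup P₂] [Module R P₂] [Module.Finite R P₂] [Module.Projective R P₂]
    {d₁ : P₁ →ₗ[R] P₀} {d₂ : P₂ →ₗ[R] P₁}
    (hN : LinearMap.ker (LinearMap.lcomp ℤ N (rightDualMap d₁)) ≤
      LinearMap.range (LinearMap.lcomp ℤ N (rightDualMap d₂)))
    {f : P₁ →ₗ[R] CharGroup N} (hf : f ∘ₗ d₂ = 0) : ∃ h : P₀ →ₗ[R] CharGroup N, h ∘ₗ d₁ = f := by
  obtain ⟨Φ, rfl⟩ := characterOfDual_surjective f
  have hΦ : Φ ∘ₗ LinearMap.lcomp ℤ N (rightDualMap d₂) = 0 :=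
    characterOfDual_injective (by rw [← characterOfDual_comp, hf]; rfl)
  obtain ⟨Ψ, hΨ⟩ := exists_comp_eq_of_baer (Module.Baer.of_divisible _)
    (LinearMap.lcomp ℤ N (rightDualMap d₁)) Φ (hN.trans (LinearMap.range_le_ker_iff.2 hΦ))
  exact ⟨characterOfDual Ψ, by rw [characterOfDual_comp, hΨ]⟩

end Character

section WeakFlat

variable {R : Type u} [Ring R] {n k : ℕ}

theorem ker_lcomp_le_range_lcomp_of_directedOn {P₀ P₁ P₂ : Type*} [AddCommGroup P₀] [Module R P₀]
    [Module.Finite R P₀] [Module.Projective R P₀] [AddCommGroup P₁] [Module R P₁]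
    [Module.Finite R P₁] [Module.Projective R P₁] [AddCommGroup P₂] [Module R P₂]
    {d₁ : P₁ →ₗ[R] P₀} {d₂ : P₂ →ₗ[R] P₁}
    (hd : LinearMap.ker (rightDualMap d₂) ≤ LinearMap.range (rightDualMap d₁))
    {E : Type u} [AddCommGroup E] [Module Rᵐᵒᵖ E] [Module.Injective Rᵐᵒᵖ E]
    {c : Set (Submodule Rᵐᵒᵖ E)} (hne : c.Nonempty) (hdir : DirectedOn (· ≤ ·) c)
    (hc : ∀ I ∈ c, Module.Injective Rᵐᵒᵖ I) :
    LinearMap.ker (LinearMap.lcomp ℤ (E ⧸ sSup c) (rightDualMap d₁)) ≤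
      LinearMap.range (LinearMap.lcomp ℤ (E ⧸ sSup c) (rightDualMap d₂)) := by
  intro g hg
  obtain ⟨g', hg'⟩ := Module.projective_lifting_property (sSup c).mkQ g (sSup c).mkQ_surjective
  have hle : LinearMap.range (g' ∘ₗ rightDualMap d₁) ≤ sSup c := by
    rw [← (sSup c).ker_mkQ, LinearMap.range_le_ker_iff, ← LinearMap.comp_assoc, hg']
    exact hg
  have hfg : (LinearMap.range (g' ∘ₗ rightDualMap d₁)).FG :=
    Module.Finite.iff_fg.1 (Module.Finite.range _)
  obtain ⟨I, hI, hgI⟩ : ∃ I ∈ c, LinearMap.range (g' ∘ₗ rightDualMap d₁) ≤ I :=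
    (CompleteLattice.isCompactElement_iff_le_of_directed_sSup_le _ _).1
      ((Submodule.fg_iff_compact _).1 hfg) c hne hdir hle
  have := hc I hI
  have hker : LinearMap.range (rightDualMap d₁) ≤ LinearMap.ker (I.mkQ ∘ₗ g') := by
    rwa [LinearMap.range_le_ker_iff, LinearMap.comp_assoc, ← LinearMap.range_le_ker_iff, I.ker_mkQ]
  obtain ⟨h, hh⟩ := exists_comp_eq_of_baer (Module.Baer.of_injective (moduleInjective_quotient I))
    (rightDualMap d₂) (I.mkQ ∘ₗ g') (hd.trans hker)
  refine ⟨Submodule.factor (le_sSup hI) ∘ₗ h, ?_⟩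
  rw [LinearMap.lcomp_apply', LinearMap.comp_assoc, hh, ← LinearMap.comp_assoc,
    Submodule.factor_comp_mk, hg']

theorem nwfdLE_quotient_sSup (h : nwidLE R n k (ModuleCat.of R R)) {E : Type u} [AddCommGroup E]
    [Module Rᵐᵒᵖ E] [Module.Injective Rᵐᵒᵖ E] {c : Set (Submodule Rᵐᵒᵖ E)} (hne : c.Nonempty)
    (hdir : DirectedOn (· ≤ ·) c) (hc : ∀ I ∈ c, Module.Injective Rᵐᵒᵖ I) :
    nwfdLE R n k (ModuleCat.of Rᵐᵒᵖ (E ⧸ sSup c)) := by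
  intro K hK
  obtain ⟨P, hP⟩ := hK.exists_projectiveResolution_finite
  have (i : ℕ) : Module.Projective R (P.complex.X i) :=
    (IsProjective.iff_projective _).2 (P.projective i)
  refine (extVanish_succ_iff P k _).2 fun f hf => ?_
  exact exists_comp_eq_charGroup_of_ker_le_range (ker_lcomp_le_range_lcomp_of_directedOn
    ((extVanish_succ_iff P k _).1 (h K hK)) hne hdir hc) hf

end WeakFlat

section WeakCotorsion

theorem exists_injective_linearMap_to_moduleInjective {S : Type u} [Ring S] (M : ModuleCat.{u} S) :
    ∃ (E : ModuleCat.{u} S) (ι : M →ₗ[S] E), Module.Injective S E ∧ Function.Injective ι :=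
  ⟨Injective.under M, (Injective.ι M).hom,
    (Module.injective_iff_injective_object S _).2
      (inferInstanceAs (Injective (Injective.under M))),
    (ModuleCat.mono_iff_injective (Injective.ι M)).1 inferInstance⟩

theorem isReducedModule_of_maximal {S : Type u} [Ring S] {M : ModuleCat.{u} S}
    {V W : Submodule S M}
    (hV : Maximal (fun I : Submodule S M => Module.Injective S I) V) (hVW : Disjoint V W) :
    IsReducedModule S (ModuleCat.of S W) := by
  intro Q hQ
  have := hV.prop
  have hQW : Q.map W.subtype ≤ W := W.map_subtype_le Q
  have hdisj : Disjoint V (Q.map W.subtype) := hVW.mono_right hQW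
  have : Module.Injective S (Q.map W.subtype) := moduleInjective_map W.subtype Q (by simp)
  have hle : Q.map W.subtype ≤ V :=
    le_sup_right.trans (hV.le_of_ge (moduleInjective_sup V (Q.map W.subtype) hdisj) le_sup_left)
  exact Submodule.map_injective_of_injective W.injective_subtype
    ((hdisj.symm.eq_bot_of_le hle).trans (Submodule.map_bot _).symm)

variable {R : Type u} [Ring R] {n k : ℕ} {M : ModuleCat.{u} Rᵐᵒᵖ}

theorem IsNKWeakCotorsion.of_retract {X : ModuleCat.{u} Rᵐᵒᵖ} (hM : IsNKWeakCotorsion R n k M)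
    (e : Retract X M) : IsNKWeakCotorsion R n k X :=
  fun N hN => extVanish_of_retract e (hM N hN)

theorem IsNKWeakCotorsion.injective_prod {E X : ModuleCat.{u} Rᵐᵒᵖ} (hX : IsNKWeakCotorsion R n k X)
    (hE : Module.Injective Rᵐᵒᵖ E) : IsNKWeakCotorsion R n k (ModuleCat.of Rᵐᵒᵖ (E × X)) :=
  fun N hN => extVanish_succ_prod (extVanish_succ_of_injective hE) (hX N hN)

theorem IsNKWeakCotorsion.exists_sSup_le_injective (hM : IsNKWeakCotorsion R n k M)
    (h : nwidLE R n k (ModuleCat.of R R)) {c : Set (Submodule Rᵐᵒᵖ M)} (hne : c.Nonempty)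
    (hdir : DirectedOn (· ≤ ·) c) (hc : ∀ I ∈ c, Module.Injective Rᵐᵒᵖ I) :
    ∃ V, sSup c ≤ V ∧ Module.Injective Rᵐᵒᵖ V := by
  obtain ⟨E, ι, hE, hι⟩ := exists_injective_linearMap_to_moduleInjective M
  have hquot : nwfdLE R n k (ModuleCat.of Rᵐᵒᵖ (E ⧸ (sSup c).map ι)) := by
    rw [(Submodule.gc_map_comap ι).l_sSup, ← sSup_image]
    refine nwfdLE_quotient_sSup h (hne.image _) ?_ ?_
    · exact hdir.mono_comp fun _ _ => Submodule.map_mono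
    · rintro _ ⟨I, hI, rfl⟩
      have := hc I hI
      exact moduleInjective_map ι I (by simp [LinearMap.ker_eq_bot.2 hι])
  let e := Submodule.equivMapOfInjective ι hι (sSup c)
  obtain ⟨g, hg⟩ := exists_extension_of_extVanish_one ((sSup c).map ι) (hM _ hquot)
    ((sSup c).subtype ∘ₗ e.symm.toLinearMap)
  refine exists_le_injective_of_section ι g (sSup c) fun u hu => ?_
  calc g (ι u) = e.symm (e ⟨u, hu⟩) := LinearMap.congr_fun hg (e ⟨u, hu⟩)
    _ = u := by rw [e.symm_apply_apply]

theorem IsNKWeakCotorsion.exists_maximal_injective (hM : IsNKWeakCotorsion R n k M)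
    (h : nwidLE R n k (ModuleCat.of R R)) :
    ∃ V : Submodule Rᵐᵒᵖ M, Maximal (fun I : Submodule Rᵐᵒᵖ M => Module.Injective Rᵐᵒᵖ I) V := by
  have hbot : Module.Injective Rᵐᵒᵖ (⊥ : Submodule Rᵐᵒᵖ M) :=
    ⟨fun _ _ _ _ _ _ _ _ _ => ⟨0, fun _ => Subsingleton.elim _ _⟩⟩
  obtain ⟨V, -, hV⟩ := zorn_le_nonempty₀ {I : Submodule Rᵐᵒᵖ M | Module.Injective Rᵐᵒᵖ I}
    (fun c hc hchain I hI => by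
      obtain ⟨V, hle, hV⟩ := hM.exists_sSup_le_injective h ⟨I, hI⟩ hchain.directedOn hc
      exact ⟨V, hV, fun J hJ => (le_sSup hJ).trans hle⟩) ⊥ hbot
  exact ⟨V, hV⟩

end WeakCotorsion

/-- if `n-wid(_R R) ≤ k`, then `M` is `(n,k)`-weak cotorsion iff `M` is
the direct sum of an injective module and a reduced `(n,k)`-weak cotorsion module. -/
theorem stmt11 (R : Type u) [Ring R] (n k : ℕ)
    (h : nwidLE R n k (ModuleCat.of R R)) (M : ModuleCat.{u} Rᵐᵒᵖ) :
    IsNKWeakCotorsion R n k M ↔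
      ∃ (E N' : ModuleCat.{u} Rᵐᵒᵖ),
        Module.Injective Rᵐᵒᵖ E ∧ IsReducedModule Rᵐᵒᵖ N' ∧
        IsNKWeakCotorsion R n k N' ∧
        Nonempty ((M : Type u) ≃ₗ[Rᵐᵒᵖ] (E × N')) := by
  constructor
  · intro hM
    obtain ⟨V, hV⟩ := hM.exists_maximal_injective h
    have := hV.prop
    obtain ⟨W, hVW⟩ := exists_isCompl_of_moduleInjective V
    refine ⟨ModuleCat.of Rᵐᵒᵖ V, ModuleCat.of Rᵐᵒᵖ W, hV.prop,
      isReducedModule_of_maximal hV hVW.disjoint, hM.of_retract ?_,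
      ⟨(Submodule.prodEquivOfIsCompl V W hVW).symm⟩⟩
    exact ⟨ModuleCat.ofHom W.subtype, ModuleCat.ofHom (W.projectionOnto V hVW.symm),
      ModuleCat.hom_ext (LinearMap.ext fun w => Submodule.projectionOnto_apply_left hVW.symm w)⟩
  · rintro ⟨E, N', hE, -, hN', ⟨e⟩⟩
    exact (hN'.injective_prod hE).of_retract (Retract.ofIso e.toModuleIso)
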